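/- Let H be a real Hilbert space, N ⊆ H a closed linear subspace, r_c, r₁, …, r_m ∈ [0,1) with arcsin r_c + Σ_{j=1}^m arcsin r_j ≤ π/2, and for each j = 1, …, m let Δ_j : H → H be a map satisfying ‖Δ_j u‖ ≤ r_j ‖u‖ for all u ∈ H. If v ∈ H satisfies (I + Δ_m) ∘ ⋯ ∘ (I + Δ_1)(v) ∈ S(N, r_c), then v ∈ S(N, sin(arcsin r_c + Σ_{j=1}^m arcsin r_j)), where I denotes the identity map on H. -/

import Mathlib

/-- The conelike neighborhood `S(M, r)` of a set `M` in a real Hilbert space. -/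
noncomputable def coneNbhd {H : Type*} [NormedAddCommGroup H] [InnerProductSpace ℝ H]
    (M : Set H) (r : ℝ) : Set H :=
  {v | sInf {d : ℝ | ∃ u ∈ M, u ≠ 0 ∧ d = ‖v - u‖ / ‖u‖} ≤ r} ∪ {0}

/-- The composition `(I + Δ_m) ∘ ⋯ ∘ (I + Δ_1)`, where `I` is the identity map. -/
def chain {H : Type*} [AddCommGroup H] : (k : ℕ) → (Fin k → H → H) → H → H
  | 0, _ => id
  | k + 1, Δ => (fun x => x + Δ (Fin.last k) x) ∘ chain k (fun j => Δ j.castSucc)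

/-!
For `θ < π / 2` and a cone `M` other than `{0}`, a nonzero `v` lies in `S(M, sin θ)` if and only if
for every `φ > θ` it makes an angle at most `φ` with some vector of `M`: the best positive multiple
of `u` approximates `v` with relative error `sin (angle v u)`. A perturbation `I + Δ` with
`‖Δ x‖ ≤ r ‖x‖` rotates every vector by at most `arcsin r`, so the triangle inequality for angles
adds up all the arcsines. When the total is `π / 2` there is nothing to control: far-away multiples
of a single nonzero vector of `M` approximate `v` with relative error arbitrarily close to `1`.
-/

section Angle

open Real InnerProductGeometry

variable {H : Type*} [NormedAddCommGroup H] [InnerProductSpace ℝ H]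

lemma norm_sub_sq_eq_sq_add_sq_sin_angle (x y : H) :
    ‖x - y‖ ^ 2 = (‖x‖ - cos (angle x y) * ‖y‖) ^ 2 + (sin (angle x y) * ‖y‖) ^ 2 := by
  rw [norm_sub_sq_real, ← cos_angle_mul_norm_mul_norm, mul_pow (sin _), sin_sq]
  ring

lemma sin_angle_mul_norm_le_norm_sub (x y : H) : sin (angle x y) * ‖y‖ ≤ ‖x - y‖ := by
  refine le_of_sq_le_sq ?_ (norm_nonneg _)
  rw [norm_sub_sq_eq_sq_add_sq_sin_angle]
  exact le_add_of_nonneg_left (sq_nonneg _)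

lemma angle_le_pi_div_two_of_norm_sub_le {x y : H} (h : ‖x - y‖ ≤ ‖y‖) :
    angle x y ≤ π / 2 := by
  have hinner : 0 ≤ inner ℝ x y := by
    have hsq : ‖x - y‖ ^ 2 ≤ ‖y‖ ^ 2 := by gcongr
    rw [norm_sub_sq_real] at hsq
    linarith [sq_nonneg ‖x‖]
  exact arccos_le_pi_div_two.mpr (by positivity)

lemma angle_le_arcsin_of_norm_sub_le {x y : H} {s : ℝ} (hy : y ≠ 0) (hs : s ≤ 1)
    (h : ‖x - y‖ ≤ s * ‖y‖) : angle x y ≤ arcsin s := by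
  have hle : angle x y ≤ π / 2 := angle_le_pi_div_two_of_norm_sub_le <|
    h.trans (mul_le_of_le_one_left (norm_nonneg y) hs)
  have hgt : -(π / 2) < angle x y := by linarith [angle_nonneg x y, pi_pos]
  rw [le_arcsin_iff_sin_le' ⟨hgt, hle⟩]
  exact le_of_mul_le_mul_right ((sin_angle_mul_norm_le_norm_sub x y).trans h) (norm_pos_iff.mpr hy)

lemma ne_zero_of_angle_lt_pi_div_two {x y : H} (h : angle x y < π / 2) : x ≠ 0 ∧ y ≠ 0 := by
  constructor <;> rintro rfl <;> simp at h

lemma exists_pos_norm_sub_smul_eq {x y : H} (h : angle x y < π / 2) :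
    ∃ t : ℝ, 0 < t ∧ ‖x - t • y‖ = sin (angle x y) * ‖t • y‖ := by
  obtain ⟨hx, hy⟩ := ne_zero_of_angle_lt_pi_div_two h
  have hcos : 0 < cos (angle x y) :=
    cos_pos_of_mem_Ioo ⟨by linarith [angle_nonneg x y, pi_pos], h⟩
  set t := ‖x‖ / (cos (angle x y) * ‖y‖) with ht
  have ht_pos : 0 < t := by positivity
  have hproj : ‖x‖ - cos (angle x y) * ‖t • y‖ = 0 := by
    rw [norm_smul, norm_of_nonneg ht_pos.le, ht]
    field_simp
    ring
  refine ⟨t, ht_pos, ?_⟩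
  have hsin : 0 ≤ sin (angle x y) * ‖t • y‖ := mul_nonneg (sin_angle_nonneg x y) (norm_nonneg _)
  rw [← sq_eq_sq₀ (norm_nonneg _) hsin, norm_sub_sq_eq_sq_add_sq_sin_angle,
    angle_smul_right_of_pos x y ht_pos, hproj]
  ring

end Angle

section RelativeErrors

variable {E : Type*} [NormedAddCommGroup E] {M : Set E}

/-- The relative errors made when approximating `v` by the nonzero vectors of `M`; their infimum is
the quantity that `coneNbhd M r` bounds by `r`. -/
def relativeErrors (M : Set E) (v : E) : Set ℝ :=
  {d | ∃ u ∈ M, u ≠ 0 ∧ d = ‖v - u‖ / ‖u‖}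

lemma div_norm_mem_relativeErrors {u v : E} (huM : u ∈ M) (hu : u ≠ 0) :
    ‖v - u‖ / ‖u‖ ∈ relativeErrors M v :=
  ⟨u, huM, hu, rfl⟩

lemma bddBelow_relativeErrors (M : Set E) (v : E) : BddBelow (relativeErrors M v) :=
  ⟨0, by rintro _ ⟨u, -, -, rfl⟩; positivity⟩

lemma relativeErrors_eq_empty (hM : ∀ u ∈ M, u = 0) (v : E) : relativeErrors M v = ∅ :=
  Set.eq_empty_of_forall_notMem fun _ ⟨u, huM, hu, _⟩ => hu (hM u huM)

end RelativeErrors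

section ConeNbhd

open Real InnerProductGeometry

variable {H : Type*} [NormedAddCommGroup H] [InnerProductSpace ℝ H] {M : Set H} {v w : H}

lemma mem_coneNbhd_iff {r : ℝ} : v ∈ coneNbhd M r ↔ sInf (relativeErrors M v) ≤ r ∨ v = 0 :=
  Iff.rfl

lemma zero_mem_coneNbhd {r : ℝ} : (0 : H) ∈ coneNbhd M r := mem_coneNbhd_iff.mpr (Or.inr rfl)

lemma exists_norm_sub_le_of_mem_coneNbhd {r s : ℝ} (hM : ∃ u ∈ M, u ≠ 0) (hv : v ≠ 0)
    (h : v ∈ coneNbhd M r) (hs : r < s) : ∃ u ∈ M, u ≠ 0 ∧ ‖v - u‖ ≤ s * ‖u‖ := by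
  obtain ⟨u₀, hu₀M, hu₀⟩ := hM
  have hInf := ((mem_coneNbhd_iff.mp h).resolve_right hv).trans_lt hs
  obtain ⟨_, ⟨u, huM, hu, rfl⟩, hlt⟩ :=
    exists_lt_of_csInf_lt ⟨_, div_norm_mem_relativeErrors hu₀M hu₀⟩ hInf
  exact ⟨u, huM, hu, (div_le_iff₀ (norm_pos_iff.mpr hu)).mp hlt.le⟩

lemma mem_coneNbhd_of_forall_gt {r : ℝ}
    (h : ∀ s > r, ∃ u ∈ M, u ≠ 0 ∧ ‖v - u‖ ≤ s * ‖u‖) : v ∈ coneNbhd M r := by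
  refine mem_coneNbhd_iff.mpr <| Or.inl (le_of_forall_gt_imp_ge_of_dense fun s hs => ?_)
  obtain ⟨u, huM, hu, hle⟩ := h s hs
  calc sInf (relativeErrors M v) ≤ ‖v - u‖ / ‖u‖ :=
        csInf_le (bddBelow_relativeErrors M v) (div_norm_mem_relativeErrors huM hu)
    _ ≤ s := (div_le_iff₀ (norm_pos_iff.mpr hu)).mpr hle

-- Here the infimum defining `coneNbhd M r` is `sInf ∅ = 0`.
lemma mem_coneNbhd_of_forall_eq_zero {r : ℝ} (hM : ∀ u ∈ M, u = 0) (hr : 0 ≤ r) (v : H) :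
    v ∈ coneNbhd M r := by
  rw [mem_coneNbhd_iff, relativeErrors_eq_empty hM, sInf_empty]
  exact Or.inl hr

lemma exists_angle_le_of_mem_coneNbhd_sin {θ φ : ℝ} (hM : ∃ u ∈ M, u ≠ 0) (hv : v ≠ 0)
    (hθ : θ ∈ Set.Ico (-(π / 2)) (π / 2)) (h : v ∈ coneNbhd M (sin θ)) (hφ : θ < φ) :
    ∃ u ∈ M, angle v u ≤ φ := by
  obtain ⟨ψ, hθψ, hψ⟩ := exists_between (lt_min hφ hθ.2)
  obtain ⟨hψφ, hψπ⟩ := lt_min_iff.mp hψ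
  have hsin : sin θ < sin ψ := sin_lt_sin_of_lt_of_le_pi_div_two hθ.1 hψπ.le hθψ
  obtain ⟨u, huM, hu, hle⟩ := exists_norm_sub_le_of_mem_coneNbhd hM hv h hsin
  refine ⟨u, huM, ?_⟩
  calc angle v u ≤ arcsin (sin ψ) := angle_le_arcsin_of_norm_sub_le hu (sin_le_one ψ) hle
    _ = ψ := arcsin_sin (hθ.1.trans hθψ.le) hψπ.le
    _ ≤ φ := hψφ.le

lemma mem_coneNbhd_sin_of_forall_exists_angle_le {θ : ℝ}
    (hM : ∀ t : ℝ, 0 < t → ∀ u ∈ M, t • u ∈ M) (hθ : θ ∈ Set.Ico (-(π / 2)) (π / 2))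
    (h : ∀ φ > θ, ∃ u ∈ M, angle v u ≤ φ) : v ∈ coneNbhd M (sin θ) := by
  refine mem_coneNbhd_of_forall_gt fun s hs => ?_
  obtain ⟨φ, hθφ, hφs⟩ := exists_between ((lt_arcsin_iff_sin_lt' hθ).mpr hs)
  have hφ : φ < π / 2 := hφs.trans_le (arcsin_le_pi_div_two s)
  obtain ⟨u, huM, hangle⟩ := h φ hθφ
  obtain ⟨t, ht, hdist⟩ := exists_pos_norm_sub_smul_eq (hangle.trans_lt hφ)
  have hu : u ≠ 0 := (ne_zero_of_angle_lt_pi_div_two (hangle.trans_lt hφ)).2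
  refine ⟨t • u, hM t ht u huM, smul_ne_zero ht.ne' hu, hdist.trans_le ?_⟩
  have hsin : sin (angle v u) ≤ s := by
    refine (le_arcsin_iff_sin_le' ⟨?_, (hangle.trans_lt hφ).le⟩).mp (hangle.trans hφs.le)
    linarith [angle_nonneg v u, pi_pos]
  gcongr

lemma mem_coneNbhd_one (hM : ∀ t : ℝ, 0 < t → ∀ u ∈ M, t • u ∈ M) (v : H) :
    v ∈ coneNbhd M 1 := by
  by_cases htriv : ∀ u ∈ M, u = 0
  · exact mem_coneNbhd_of_forall_eq_zero htriv zero_le_one v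
  push Not at htriv
  obtain ⟨u, huM, hu⟩ := htriv
  rcases eq_or_ne v 0 with rfl | hv
  · exact zero_mem_coneNbhd
  refine mem_coneNbhd_of_forall_gt fun s hs => ?_
  have hs' : 0 < s - 1 := sub_pos.mpr hs
  set t := ‖v‖ / ((s - 1) * ‖u‖) with ht
  have ht_pos : 0 < t := by positivity
  refine ⟨t • u, hM t ht_pos u huM, smul_ne_zero ht_pos.ne' hu, ?_⟩
  have hnorm : ‖v‖ = (s - 1) * ‖t • u‖ := by
    rw [norm_smul, norm_of_nonneg ht_pos.le, ht]
    field_simp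
  calc ‖v - t • u‖ ≤ ‖v‖ + ‖t • u‖ := norm_sub_le _ _
    _ = s * ‖t • u‖ := by rw [hnorm]; ring

lemma mem_coneNbhd_sin_add_of_angle_le {α β : ℝ} (hM : ∀ t : ℝ, 0 < t → ∀ u ∈ M, t • u ∈ M)
    (hα : 0 ≤ α) (hβ : angle v w ≤ β) (hαβ : α + β ≤ π / 2) (hw : w ∈ coneNbhd M (sin α)) :
    v ∈ coneNbhd M (sin (α + β)) := by
  have hβ₀ : 0 ≤ β := (angle_nonneg v w).trans hβ
  rcases hαβ.eq_or_lt with heq | hlt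
  · rw [heq, sin_pi_div_two]
    exact mem_coneNbhd_one hM v
  by_cases htriv : ∀ u ∈ M, u = 0
  · exact mem_coneNbhd_of_forall_eq_zero htriv
      (sin_nonneg_of_nonneg_of_le_pi (by positivity) (by linarith [pi_pos])) v
  push Not at htriv
  have hw₀ : w ≠ 0 := (ne_zero_of_angle_lt_pi_div_two (x := v) (by linarith)).2
  refine mem_coneNbhd_sin_of_forall_exists_angle_le hM ⟨by linarith [pi_pos], hlt⟩ fun φ hφ => ?_
  obtain ⟨u, huM, hu⟩ := exists_angle_le_of_mem_coneNbhd_sin htriv hw₀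
    ⟨by linarith [pi_pos], by linarith⟩ hw (lt_sub_iff_add_lt.mpr hφ)
  exact ⟨u, huM, by linarith [angle_le_angle_add_angle v w u]⟩

end ConeNbhd

section Chain

open Real InnerProductGeometry

lemma chain_ne_zero {E : Type*} [NormedAddCommGroup E] {m : ℕ} {r : Fin m → ℝ}
    (hr : ∀ j, r j < 1) {Δ : Fin m → E → E} (hΔ : ∀ j u, ‖Δ j u‖ ≤ r j * ‖u‖) {v : E}
    (hv : v ≠ 0) : chain m Δ v ≠ 0 := by
  induction m with
  | zero => exact hv
  | succ k ih =>
    have hx := ih (fun j => hr j.castSucc) (fun j => hΔ j.castSucc)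
    set x := chain k (fun j => Δ j.castSucc) v
    have hlt : ‖Δ (Fin.last k) x‖ < ‖x‖ :=
      (hΔ _ x).trans_lt (mul_lt_of_lt_one_left (norm_pos_iff.mpr hx) (hr _))
    intro (h : x + Δ (Fin.last k) x = 0)
    rw [eq_neg_of_add_eq_zero_right h, norm_neg] at hlt
    exact hlt.false

variable {H : Type*} [NormedAddCommGroup H] [InnerProductSpace ℝ H]

lemma angle_chain_le {m : ℕ} {r : Fin m → ℝ} (hr : ∀ j, r j < 1) {Δ : Fin m → H → H}
    (hΔ : ∀ j u, ‖Δ j u‖ ≤ r j * ‖u‖) {v : H} (hv : v ≠ 0) :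
    angle v (chain m Δ v) ≤ ∑ j, arcsin (r j) := by
  induction m with
  | zero => simp [chain, hv]
  | succ k ih =>
    set x := chain k (fun j => Δ j.castSucc) v
    have hx₀ : x ≠ 0 := chain_ne_zero (fun j => hr j.castSucc) (fun j => hΔ j.castSucc) hv
    have hstep : angle x (x + Δ (Fin.last k) x) ≤ arcsin (r (Fin.last k)) := by
      rw [angle_comm]
      exact angle_le_arcsin_of_norm_sub_le hx₀ (hr _).le (by simpa using hΔ _ x)
    calc angle v (x + Δ (Fin.last k) x) ≤ angle v x + angle x (x + Δ (Fin.last k) x) :=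
        angle_le_angle_add_angle _ _ _
      _ ≤ ∑ j : Fin k, arcsin (r j.castSucc) + arcsin (r (Fin.last k)) :=
        add_le_add (ih (fun j => hr j.castSucc) (fun j => hΔ j.castSucc)) hstep
      _ = ∑ j, arcsin (r j) := (Fin.sum_univ_castSucc fun j => arcsin (r j)).symm

theorem stmt11_general {M : Set H} (hM : ∀ t : ℝ, 0 < t → ∀ u ∈ M, t • u ∈ M)
    {m : ℕ} {rc : ℝ} (hrc₀ : 0 ≤ rc) (hrc₁ : rc ≤ 1) {r : Fin m → ℝ}
    (hsum : arcsin rc + ∑ j, arcsin (r j) ≤ π / 2) (hr : ∀ j, r j < 1)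
    {Δ : Fin m → H → H} (hΔ : ∀ j u, ‖Δ j u‖ ≤ r j * ‖u‖) {v : H}
    (hv : chain m Δ v ∈ coneNbhd M rc) :
    v ∈ coneNbhd M (sin (arcsin rc + ∑ j, arcsin (r j))) := by
  rcases eq_or_ne v 0 with rfl | hv₀
  · exact zero_mem_coneNbhd
  rw [← sin_arcsin (neg_one_lt_zero.le.trans hrc₀) hrc₁] at hv
  exact mem_coneNbhd_sin_add_of_angle_le hM (arcsin_nonneg.mpr hrc₀)
    (angle_chain_le hr hΔ hv₀) hsum hv

end Chain

theorem stmt11 {H : Type*} [NormedAddCommGroup H] [InnerProductSpace ℝ H] [CompleteSpace H]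
    (N : Submodule ℝ H) (hNc : IsClosed (N : Set H))
    (m : ℕ) (rc : ℝ) (hrc : 0 ≤ rc ∧ rc < 1)
    (r : Fin m → ℝ) (hr : ∀ j, 0 ≤ r j ∧ r j < 1)
    (hsum : Real.arcsin rc + ∑ j, Real.arcsin (r j) ≤ Real.pi / 2)
    (Δ : Fin m → H → H) (hΔ : ∀ j, ∀ u : H, ‖Δ j u‖ ≤ r j * ‖u‖)
    (v : H) (hv : chain m Δ v ∈ coneNbhd (N : Set H) rc) :
    v ∈ coneNbhd (N : Set H) (Real.sin (Real.arcsin rc + ∑ j, Real.arcsin (r j))) := by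
  exact stmt11_general (fun t _ u hu => N.smul_mem t hu) hrc.1 hrc.2.le hsum
    (fun j => (hr j).2) hΔ hv
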